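/- arXiv:1104.4534 — 3 statements merged into one kernel-verified Lean document; each statement's English description precedes it below -/
import Mathlib

section
/- (Comparison principle for the stationary problem with the zero set 𝒜 as boundary.) Assume H_i(x,p) = F_i(x,p) − f_i(x) with F_i, f_i satisfying (A1)–(A5). Let (u₁, u₂) be a pair of upper semicontinuous functions on 𝕋^n that is a viscosity subsolution of (S1), and let (v₁, v₂) be a pair of lower semicontinuous functions on 𝕋^n that is a viscosity supersolution of (S1). If u_i ≤ v_i on 𝒜 for i = 1,2, then u_i ≤ v_i on all of 𝕋^n for i = 1,2. -/
open MeasureTheory Filter Topology Set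

noncomputable section

/-- Euclidean space `ℝ^n`; the torus `𝕋^n` is modelled by `ℤ^n`-periodic functions on it. -/
abbrev En (n : ℕ) : Type := EuclideanSpace ℝ (Fin n)

/-- The integer vector `k ∈ ℤ^n` viewed as an element of `ℝ^n`. -/
def intVec (n : ℕ) (k : Fin n → ℤ) : En n := WithLp.toLp 2 (fun i => (k i : ℝ))

/-- A `ℤ^n`-periodic function on `ℝ^n`, i.e. a function on the torus `𝕋^n`. -/
def ZPeriodic {n : ℕ} (f : En n → ℝ) : Prop :=
  ∀ (x : En n) (k : Fin n → ℤ), f (x + intVec n k) = f x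

/-- A Hamiltonian `H : 𝕋^n × ℝ^n → ℝ` (periodic in the first variable). -/
def ZPeriodicH {n : ℕ} (H : En n → En n → ℝ) : Prop :=
  ∀ (x : En n) (k : Fin n → ℤ) (p : En n), H (x + intVec n k) p = H x p

/-- A function on `𝕋^n × ℝ` (space-time, periodic in space). -/
def ZPeriodicST {n : ℕ} (u : En n × ℝ → ℝ) : Prop :=
  ∀ (x : En n) (k : Fin n → ℤ) (t : ℝ), u (x + intVec n k, t) = u (x, t)

/-- (A1): coercivity, `lim_{r→∞} inf{H(x,p) : x ∈ 𝕋^n, |p| ≥ r} = ∞`. -/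
def Coercive {n : ℕ} (H : En n → En n → ℝ) : Prop :=
  ∀ M : ℝ, ∃ r : ℝ, ∀ (x p : En n), r ≤ ‖p‖ → M ≤ H x p

/-- Coercivity for an `x`-independent Hamiltonian. -/
def CoerciveP {n : ℕ} (H : En n → ℝ) : Prop :=
  ∀ M : ℝ, ∃ r : ℝ, ∀ p : En n, r ≤ ‖p‖ → M ≤ H p

/-- Lipschitz continuity (membership in `W^{1,∞}`). -/
def IsLip {n : ℕ} (f : En n → ℝ) : Prop := ∃ K : NNReal, LipschitzWith K f

/-- Viscosity subsolution inequality for one stationary equation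
`H(x, Dw) + c (w - wo) ≤ ρ(x)` of a weakly coupled system. -/
def StatSubIneq {n : ℕ} (H : En n → En n → ℝ) (c : ℝ) (w wo : En n → ℝ) (ρ : En n → ℝ) : Prop :=
  ∀ φ : En n → ℝ, ContDiff ℝ 1 φ →
    ∀ x₀ : En n, IsLocalMax (fun x => w x - φ x) x₀ →
      H x₀ (gradient φ x₀) + c * (w x₀ - wo x₀) ≤ ρ x₀

/-- Viscosity supersolution inequality for one stationary equation. -/
def StatSuperIneq {n : ℕ} (H : En n → En n → ℝ) (c : ℝ) (w wo : En n → ℝ) (ρ : En n → ℝ) : Prop :=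
  ∀ φ : En n → ℝ, ContDiff ℝ 1 φ →
    ∀ x₀ : En n, IsLocalMin (fun x => w x - φ x) x₀ →
      ρ x₀ ≤ H x₀ (gradient φ x₀) + c * (w x₀ - wo x₀)

/-- Viscosity subsolution of the stationary system
`Hᵢ(x, Dwᵢ) + cᵢ (wᵢ - wⱼ) = ρᵢ(x)`, `i = 1,2`. -/
def CellSub {n : ℕ} (H₁ H₂ : En n → En n → ℝ) (c₁ c₂ : ℝ) (w₁ w₂ : En n → ℝ)
    (ρ₁ ρ₂ : En n → ℝ) : Prop :=
  StatSubIneq H₁ c₁ w₁ w₂ ρ₁ ∧ StatSubIneq H₂ c₂ w₂ w₁ ρ₂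

/-- Viscosity supersolution of the stationary system. -/
def CellSuper {n : ℕ} (H₁ H₂ : En n → En n → ℝ) (c₁ c₂ : ℝ) (w₁ w₂ : En n → ℝ)
    (ρ₁ ρ₂ : En n → ℝ) : Prop :=
  StatSuperIneq H₁ c₁ w₁ w₂ ρ₁ ∧ StatSuperIneq H₂ c₂ w₂ w₁ ρ₂

/-- Viscosity solution (continuous, sub- and supersolution) of the stationary system. -/
def CellSolution {n : ℕ} (H₁ H₂ : En n → En n → ℝ) (c₁ c₂ : ℝ) (v₁ v₂ : En n → ℝ)
    (ρ₁ ρ₂ : En n → ℝ) : Prop :=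
  Continuous v₁ ∧ Continuous v₂ ∧
    CellSub H₁ H₂ c₁ c₂ v₁ v₂ ρ₁ ρ₂ ∧ CellSuper H₁ H₂ c₁ c₂ v₁ v₂ ρ₁ ρ₂

/-- Subsolution of the ergodic problem (E) with constant `c` (coupling constants 1). -/
def ErgSub {n : ℕ} (H₁ H₂ : En n → En n → ℝ) (v₁ v₂ : En n → ℝ) (c : ℝ) : Prop :=
  CellSub H₁ H₂ 1 1 v₁ v₂ (fun _ => c) (fun _ => c)

/-- Supersolution of the ergodic problem (E). -/
def ErgSuper {n : ℕ} (H₁ H₂ : En n → En n → ℝ) (v₁ v₂ : En n → ℝ) (c : ℝ) : Prop :=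
  CellSuper H₁ H₂ 1 1 v₁ v₂ (fun _ => c) (fun _ => c)

/-- Viscosity solution of the ergodic problem (E):
`H₁(x,Dv₁) + v₁ - v₂ = c`, `H₂(x,Dv₂) + v₂ - v₁ = c` on `𝕋^n`. -/
def ErgSolution {n : ℕ} (H₁ H₂ : En n → En n → ℝ) (v₁ v₂ : En n → ℝ) (c : ℝ) : Prop :=
  CellSolution H₁ H₂ 1 1 v₁ v₂ (fun _ => c) (fun _ => c)

/-- Viscosity subsolution inequality for one evolution equation
`∂ₜ u + H(x, Du) + u - uo ≤ 0` in `𝕋^n × (0,∞)`. -/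
def EvolSubIneq {n : ℕ} (H : En n → En n → ℝ) (u uo : En n × ℝ → ℝ) : Prop :=
  ∀ φ : En n × ℝ → ℝ, ContDiff ℝ 1 φ →
    ∀ (x₀ : En n) (t₀ : ℝ), 0 < t₀ →
      IsLocalMax (fun q => u q - φ q) (x₀, t₀) →
      fderiv ℝ φ (x₀, t₀) (0, 1) + H x₀ (gradient (fun y => φ (y, t₀)) x₀)
        + u (x₀, t₀) - uo (x₀, t₀) ≤ 0

/-- Viscosity supersolution inequality for one evolution equation. -/
def EvolSuperIneq {n : ℕ} (H : En n → En n → ℝ) (u uo : En n × ℝ → ℝ) : Prop :=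
  ∀ φ : En n × ℝ → ℝ, ContDiff ℝ 1 φ →
    ∀ (x₀ : En n) (t₀ : ℝ), 0 < t₀ →
      IsLocalMin (fun q => u q - φ q) (x₀, t₀) →
      0 ≤ fderiv ℝ φ (x₀, t₀) (0, 1) + H x₀ (gradient (fun y => φ (y, t₀)) x₀)
        + u (x₀, t₀) - uo (x₀, t₀)

/-- Viscosity subsolution of system (C) (with coupling constants `c₁ = c₂ = 1`). -/
def SysSub {n : ℕ} (H₁ H₂ : En n → En n → ℝ) (u₁ u₂ : En n × ℝ → ℝ) : Prop :=
  EvolSubIneq H₁ u₁ u₂ ∧ EvolSubIneq H₂ u₂ u₁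

/-- Viscosity supersolution of system (C). -/
def SysSuper {n : ℕ} (H₁ H₂ : En n → En n → ℝ) (u₁ u₂ : En n × ℝ → ℝ) : Prop :=
  EvolSuperIneq H₁ u₁ u₂ ∧ EvolSuperIneq H₂ u₂ u₁

/-- Viscosity solution of the Cauchy problem (C): continuous on `𝕋^n × [0,∞)`,
sub- and supersolution, attaining the initial data. -/
def SysSolution {n : ℕ} (H₁ H₂ : En n → En n → ℝ) (u₀₁ u₀₂ : En n → ℝ)
    (u₁ u₂ : En n × ℝ → ℝ) : Prop :=
  ContinuousOn u₁ {q : En n × ℝ | 0 ≤ q.2} ∧ ContinuousOn u₂ {q : En n × ℝ | 0 ≤ q.2} ∧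
    SysSub H₁ H₂ u₁ u₂ ∧ SysSuper H₁ H₂ u₁ u₂ ∧
    (∀ x, u₁ (x, 0) = u₀₁ x) ∧ (∀ x, u₂ (x, 0) = u₀₂ x)

/-- Viscosity subsolution of the single stationary equation `H(x,Dv) ≤ c` on `𝕋^n`. -/
def SingleSub {n : ℕ} (H : En n → En n → ℝ) (v : En n → ℝ) (c : ℝ) : Prop :=
  ∀ φ : En n → ℝ, ContDiff ℝ 1 φ →
    ∀ x₀ : En n, IsLocalMax (fun x => v x - φ x) x₀ → H x₀ (gradient φ x₀) ≤ c

/-- Viscosity supersolution of the single stationary equation `H(x,Dv) ≥ c` on `𝕋^n`. -/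
def SingleSuper {n : ℕ} (H : En n → En n → ℝ) (v : En n → ℝ) (c : ℝ) : Prop :=
  ∀ φ : En n → ℝ, ContDiff ℝ 1 φ →
    ∀ x₀ : En n, IsLocalMin (fun x => v x - φ x) x₀ → c ≤ H x₀ (gradient φ x₀)

/-- Viscosity solution of the single stationary equation `H(x,Dv) = c` on `𝕋^n`. -/
def SingleSolution {n : ℕ} (H : En n → En n → ℝ) (v : En n → ℝ) (c : ℝ) : Prop :=
  Continuous v ∧ SingleSub H v c ∧ SingleSuper H v c

/-- Uniform convergence `u(·,t) → v` on `𝕋^n` as `t → ∞`. -/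
def UnifTendsTo {n : ℕ} (u : En n × ℝ → ℝ) (v : En n → ℝ) : Prop :=
  ∀ ε : ℝ, 0 < ε → ∃ T : ℝ, ∀ t : ℝ, T ≤ t → ∀ x : En n, |u (x, t) - v x| ≤ ε

/-- (A8)⁺ at level `η` with constant `ψ`. -/
def A8plusAt {n : ℕ} (H : En n → En n → ℝ) (η ψ : ℝ) : Prop :=
  ∀ (x p q : En n), η ≤ H x (p + q) → H x q ≤ 0 →
    ∀ μ : ℝ, 0 < μ → μ ≤ 1 → H x (p + q) + ψ * (1 - μ) ≤ μ * H x (μ⁻¹ • p + q)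

/-- (A8)⁻ at level `η` with constant `ψ`. -/
def A8minusAt {n : ℕ} (H : En n → En n → ℝ) (η ψ : ℝ) : Prop :=
  ∀ (x p q : En n), H x (p + q) ≤ -η → 0 ≤ H x q →
    ∀ μ : ℝ, 1 ≤ μ → μ * H x (μ⁻¹ • p + q) ≤ H x (p + q) - ψ * (μ - 1) / μ

/-- (A8)⁺ with threshold `η₀`. -/
def A8plus {n : ℕ} (H : En n → En n → ℝ) (η₀ : ℝ) : Prop :=
  ∀ η : ℝ, 0 < η → η ≤ η₀ → ∃ ψ : ℝ, 0 < ψ ∧ A8plusAt H η ψ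

/-- (A8)⁻ with threshold `η₀`. -/
def A8minus {n : ℕ} (H : En n → En n → ℝ) (η₀ : ℝ) : Prop :=
  ∀ η : ℝ, 0 < η → η ≤ η₀ → ∃ ψ : ℝ, 0 < ψ ∧ A8minusAt H η ψ

/-- The function `F` of the Key Lemma: `F(r) = C r` for `r ≥ 0`, `F(r) = r / C` for `r < 0`. -/
def Fc (C r : ℝ) : ℝ := if 0 ≤ r then C * r else r / C

/-- `α_η⁺(s)` (resp. `β_η⁺(s)` with `u = u₂`):
`min_{x ∈ 𝕋^n, t ≥ s} (u(x,t) - v(x) + η (t-s)) / (u(x,s) - v(x))`. -/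
def alphaPlus {n : ℕ} (u : En n × ℝ → ℝ) (v : En n → ℝ) (η s : ℝ) : ℝ :=
  sInf {r : ℝ | ∃ (x : En n) (t : ℝ), s ≤ t ∧
    r = (u (x, t) - v x + η * (t - s)) / (u (x, s) - v x)}

/-- `α_η⁻(s)` (resp. `β_η⁻(s)` with `u = u₂`):
`max_{x ∈ 𝕋^n, t ≥ s} (u(x,t) - v(x) - η (t-s)) / (u(x,s) - v(x))`. -/
def alphaMinus {n : ℕ} (u : En n × ℝ → ℝ) (v : En n → ℝ) (η s : ℝ) : ℝ :=
  sSup {r : ℝ | ∃ (x : En n) (t : ℝ), s ≤ t ∧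
    r = (u (x, t) - v x - η * (t - s)) / (u (x, s) - v x)}

/-- (A9)⁺. -/
def A9plus {n : ℕ} (H : En n → En n → ℝ) : Prop :=
  ∃ K : Set (En n), IsClosed K ∧ (∀ x ∈ K, ∀ k : Fin n → ℤ, x + intVec n k ∈ K) ∧
    (∀ x ∈ K, (∀ p : En n, 0 ≤ H x p) ∧ ∃ p : En n, H x p = 0) ∧
    (∀ ε : ℝ, 0 < ε → ∃ η₀ : ℝ, 0 < η₀ ∧ ∃ ψ : ℝ → ℝ, (∀ r : ℝ, 0 < r → 0 < ψ r) ∧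
      ∀ η : ℝ, 0 < η → η ≤ η₀ → ∀ (x p q : En n), ε ≤ Metric.infDist x K →
        η ≤ H x (p + q) → H x q ≤ 0 →
        ∀ μ : ℝ, 0 < μ → μ ≤ 1 → H x (p + q) + ψ η * (1 - μ) ≤ μ * H x (μ⁻¹ • p + q))

/-- (A9)⁻. -/
def A9minus {n : ℕ} (H : En n → En n → ℝ) : Prop :=
  ∃ K : Set (En n), IsClosed K ∧ (∀ x ∈ K, ∀ k : Fin n → ℤ, x + intVec n k ∈ K) ∧
    (∀ x ∈ K, (∀ p : En n, 0 ≤ H x p) ∧ ∃ p : En n, H x p = 0) ∧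
    (∀ ε : ℝ, 0 < ε → ∃ η₀ : ℝ, 0 < η₀ ∧ ∃ ψ : ℝ → ℝ, (∀ r : ℝ, 0 < r → 0 < ψ r) ∧
      ∀ η : ℝ, 0 < η → η ≤ η₀ → ∀ (x p q : En n), ε ≤ Metric.infDist x K →
        H x (p + q) ≤ -η → 0 ≤ H x q →
        ∀ μ : ℝ, 1 ≤ μ → μ * H x (μ⁻¹ • p + q) ≤ H x (p + q) - ψ η * (μ - 1) / μ)

/-- (A6): uniform convexity of an `x`-independent Hamiltonian. -/
def UnifConvex {n : ℕ} (H : En n → ℝ) : Prop :=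
  ∃ α : ℝ, 0 < α ∧ ∀ᵐ q : En n ∂volume, DifferentiableAt ℝ H q ∧
    ∀ p : En n, H q + fderiv ℝ H q (p - q) + α * ‖p - q‖ ^ 2 ≤ H p

end

/-!
Contract the subsolution: for `l < 1` close to `1`, (A4) makes `(l u₁, l u₂)` a subsolution off `𝒜`
with right-hand sides `l fᵢ`. At a point `z` where `maxᵢ (l uᵢ - vᵢ)` is largest over the torus,
doubling the variables yields, for the index attaining the maximum, `(1 - l) fᵢ(z)` plus a
nonnegative coupling term `≤ 0`. If `z ∉ 𝒜`, then `fᵢ(z) = 0`, the coupling term vanishes, both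
indices attain the maximum, and hence `f₁(z) = f₂(z) = 0`, a contradiction. So `z ∈ 𝒜`, where
`l uᵢ - vᵢ ≤ -(1 - l) vᵢ ≤ (1 - l) V` with `-V` a lower bound of `v₁, v₂`; now let `l → 1`.
-/

section Semicontinuity

variable {X : Type*} [TopologicalSpace X] {u v : X → ℝ}

theorem upperSemicontinuous_const_mul {l : ℝ} (hl : 0 ≤ l) (hu : UpperSemicontinuous u) :
    UpperSemicontinuous fun x => l * u x :=
  (continuous_const_mul l).comp_upperSemicontinuous hu fun _ _ h =>
    mul_le_mul_of_nonneg_left h hl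

theorem lowerSemicontinuous_const_mul {l : ℝ} (hl : 0 ≤ l) (hv : LowerSemicontinuous v) :
    LowerSemicontinuous fun x => l * v x :=
  (continuous_const_mul l).comp_lowerSemicontinuous hv fun _ _ h =>
    mul_le_mul_of_nonneg_left h hl

theorem upperSemicontinuous_neg (hv : LowerSemicontinuous v) :
    UpperSemicontinuous fun x => -v x :=
  continuous_neg.comp_lowerSemicontinuous_antitone hv fun _ _ => neg_le_neg

theorem upperSemicontinuous_sub (hu : UpperSemicontinuous u) (hv : LowerSemicontinuous v) :
    UpperSemicontinuous fun x => u x - v x := by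
  simpa only [sub_eq_add_neg] using hu.add (upperSemicontinuous_neg hv)

end Semicontinuity

section Penalization

theorem tendsto_of_isMaxOn_penalized {X ι : Type*} [TopologicalSpace X] {K : Set X}
    (hK : IsCompact K) {g P : X → ℝ} (hg : UpperSemicontinuous g) (hP : LowerSemicontinuous P)
    (hP_nonneg : ∀ x, 0 ≤ P x) {z : X} (hzK : z ∈ K) (hPz : P z = 0)
    (hz_unique : ∀ x ∈ K, P x = 0 → g z ≤ g x → x = z)
    {l : Filter ι} {c : ι → ℝ} (hc : Tendsto c l atTop) {q : ι → X} (hqK : ∀ i, q i ∈ K)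
    (hq : ∀ i, IsMaxOn (fun x => g x - c i * P x) K (q i)) :
    Tendsto q l (𝓝 z) := by
  have hmax : ∀ i, g z + c i * P (q i) ≤ g (q i) := fun i => by
    have h := isMaxOn_iff.1 (hq i) z hzK
    simp only [hPz, mul_zero] at h
    linarith
  refine hK.tendsto_nhds_of_unique_mapClusterPt (.of_forall hqK) fun x hxK hx =>
    hz_unique x hxK ?_ ?_
  · by_contra hPx
    have hPx_pos : 0 < P x / 2 := half_pos ((hP_nonneg x).lt_of_ne' hPx)
    obtain ⟨B, hB⟩ := (hg.upperSemicontinuousOn K).bddAbove_of_isCompact hK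
    obtain ⟨i, hPi, hci, hci_nonneg⟩ := ((mapClusterPt_iff_frequently.1 hx _
      (hP x (P x / 2) (by linarith))).and_eventually
        ((hc.eventually_gt_atTop ((B - g z) / (P x / 2))).and (hc.eventually_ge_atTop 0))).exists
    have hbig : B - g z < c i * (P x / 2) := (div_lt_iff₀ hPx_pos).1 hci
    have hpen : c i * (P x / 2) ≤ c i * P (q i) :=
      mul_le_mul_of_nonneg_left (le_of_lt hPi) hci_nonneg
    linarith [hmax i, hB (mem_image_of_mem g (hqK i))]
  · by_contra! hgx
    obtain ⟨i, hgi, hci_nonneg⟩ := ((mapClusterPt_iff_frequently.1 hx _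
      (hg x (g z) hgx)).and_eventually (hc.eventually_ge_atTop 0)).exists
    have hgi' : g (q i) < g z := hgi
    linarith [hmax i, mul_nonneg hci_nonneg (hP_nonneg (q i))]

variable {E : Type*} [NormedAddCommGroup E] {a b : E → ℝ} {z : E}

theorem prodMk_eq_of_doubled_ge {x y : E} (hz : a x - b x ≤ a z - b z) (hxy : ‖x - y‖ ^ 2 = 0)
    (hge : a z - b z ≤ a x - b y - ‖x - z‖ ^ 2) : (x, y) = (z, z) := by
  obtain rfl : x = y := by simpa [sub_eq_zero] using hxy
  have hxz : ‖x - z‖ ^ 2 = 0 := le_antisymm (by linarith) (sq_nonneg _)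
  obtain rfl : x = z := by simpa [sub_eq_zero] using hxz
  rfl

theorem exists_doubling_maximizers [ProperSpace E]
    (ha : UpperSemicontinuous a) (hb : LowerSemicontinuous b)
    {r : ℝ} (hr : 0 ≤ r) (hz : ∀ x ∈ Metric.closedBall z r, a x - b x ≤ a z - b z) :
    ∃ q : ℕ → E × E, Tendsto q atTop (𝓝 (z, z)) ∧ ∀ k : ℕ,
      IsMaxOn (fun p => a p.1 - b p.2 - ‖p.1 - z‖ ^ 2 - k * ‖p.1 - p.2‖ ^ 2)
        (Metric.closedBall z r ×ˢ Metric.closedBall z r) (q k) := by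
  have hK := (isCompact_closedBall z r).prod (isCompact_closedBall z r)
  have hzK : (z, z) ∈ Metric.closedBall z r ×ˢ Metric.closedBall z r :=
    ⟨Metric.mem_closedBall_self hr, Metric.mem_closedBall_self hr⟩
  have hg : UpperSemicontinuous fun p : E × E => a p.1 - b p.2 - ‖p.1 - z‖ ^ 2 :=
    upperSemicontinuous_sub
      (upperSemicontinuous_sub (ha.comp continuous_fst) (hb.comp continuous_snd))
      (Continuous.lowerSemicontinuous (by fun_prop))
  have hpen (k : ℕ) : LowerSemicontinuous fun p : E × E => k * ‖p.1 - p.2‖ ^ 2 :=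
    Continuous.lowerSemicontinuous (by fun_prop)
  choose q hqK hq using fun k : ℕ =>
    ((upperSemicontinuous_sub hg (hpen k)).upperSemicontinuousOn _).exists_isMaxOn ⟨_, hzK⟩ hK
  refine ⟨q, ?_, hq⟩
  refine tendsto_of_isMaxOn_penalized hK hg (Continuous.lowerSemicontinuous (by fun_prop))
    (fun _ => sq_nonneg _) hzK (by simp) (fun p hpK hp0 hge => ?_)
    tendsto_natCast_atTop_atTop hqK hq
  exact prodMk_eq_of_doubled_ge (hz p.1 hpK.1) hp0 (by simpa using hge)

theorem exists_doubling_sequences [ProperSpace E]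
    (ha : UpperSemicontinuous a) (hb : LowerSemicontinuous b)
    (hz : IsLocalMax (fun x => a x - b x) z) :
    ∃ x y : ℕ → E, Tendsto x atTop (𝓝 z) ∧ Tendsto y atTop (𝓝 z) ∧
      ∀ᶠ k : ℕ in atTop,
        IsLocalMax (fun t => a t - (k * ‖t - y k‖ ^ 2 + ‖t - z‖ ^ 2)) (x k) ∧
        IsLocalMin (fun t => b t - -k * ‖t - x k‖ ^ 2) (y k) ∧
        a z - b z ≤ a (x k) - b (y k) := by
  obtain ⟨r, hr, hball⟩ := Metric.nhds_basis_closedBall.eventually_iff.1 hz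
  obtain ⟨q, hqz, hq⟩ := exists_doubling_maximizers ha hb hr.le fun x hx => hball hx
  have hK : Metric.closedBall z r ×ˢ Metric.closedBall z r ∈ 𝓝 (z, z) :=
    prod_mem_nhds (Metric.closedBall_mem_nhds z hr) (Metric.closedBall_mem_nhds z hr)
  refine ⟨fun k => (q k).1, fun k => (q k).2, (continuous_fst.tendsto _).comp hqz,
    (continuous_snd.tendsto _).comp hqz, ?_⟩
  filter_upwards [hqz.eventually (eventually_mem_nhds_iff.2 hK)] with k hk
  have hmax := (hq k).isLocalMax hk
  refine ⟨?_, ?_, ?_⟩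
  · filter_upwards [hmax.comp_continuous (g := fun t => (t, (q k).2)) (b := (q k).1)
      (by fun_prop)] with t ht
    simp only [Function.comp_apply] at ht
    linarith
  · filter_upwards [hmax.comp_continuous (g := fun t => ((q k).1, t)) (b := (q k).2)
      (by fun_prop)] with t ht
    simp only [Function.comp_apply, norm_sub_rev (q k).1] at ht
    linarith [norm_sub_rev (q k).1 (q k).2]
  · have hge := isMaxOn_iff.1 (hq k) (z, z) (mem_of_mem_nhds hK)
    simp only [sub_self, norm_zero] at hge
    have := sq_nonneg ‖(q k).1 - z‖
    have : 0 ≤ (k : ℝ) * ‖(q k).1 - (q k).2‖ ^ 2 := by positivity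
    linarith

end Penalization

theorem tendsto_sub_comp_of_mem_compact {α β ι : Type*} [AddGroup α] [UniformSpace α]
    [IsUniformAddGroup α] [AddGroup β] [UniformSpace β] [IsUniformAddGroup β]
    {K : Set α} (hK : IsCompact K) {f : α → β} (hf : ∀ a ∈ K, ContinuousAt f a) {l : Filter ι}
    {a b : ι → α} (ha : ∀ᶠ i in l, a i ∈ K) (hab : Tendsto (fun i => b i - a i) l (𝓝 0)) :
    Tendsto (fun i => f (b i) - f (a i)) l (𝓝 0) := by
  have hab' : Tendsto (fun i => (a i, b i)) l (uniformity α) := by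
    rwa [uniformity_eq_comap_nhds_zero, tendsto_comap_iff]
  suffices h : Tendsto (fun i => (f (a i), f (b i))) l (uniformity β) by
    rwa [uniformity_eq_comap_nhds_zero, tendsto_comap_iff] at h
  refine fun r hr => mem_map.2 ?_
  filter_upwards [ha, hab' (hK.uniformContinuousAt_of_continuousAt f hf hr)] with i hai hi
  exact hi hai

section Gradient

variable {E : Type*} [NormedAddCommGroup E] [InnerProductSpace ℝ E]

theorem contDiff_norm_sub_sq (y : E) : ContDiff ℝ 1 fun t : E => ‖t - y‖ ^ 2 :=
  (contDiff_id.sub contDiff_const).norm_sq ℝ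

variable [CompleteSpace E] {φ ψ : E → ℝ} {φ' ψ' x : E}

theorem hasGradientAt_add (hφ : HasGradientAt φ φ' x) (hψ : HasGradientAt ψ ψ' x) :
    HasGradientAt (fun t => φ t + ψ t) (φ' + ψ') x := by
  rw [hasGradientAt_iff_hasFDerivAt, map_add]
  exact hφ.hasFDerivAt.add hψ.hasFDerivAt

theorem hasGradientAt_const_mul (c : ℝ) (hφ : HasGradientAt φ φ' x) :
    HasGradientAt (fun t => c * φ t) (c • φ') x := by
  simpa [hasGradientAt_iff_hasFDerivAt] using hφ.hasFDerivAt.const_mul c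

theorem hasGradientAt_norm_sub_sq (x y : E) :
    HasGradientAt (fun t => ‖t - y‖ ^ 2) ((2 : ℝ) • (x - y)) x := by
  rw [hasGradientAt_iff_hasFDerivAt]
  refine ((hasFDerivAt_id x).sub_const y).norm_sq.congr_fderiv ?_
  ext t
  simp

end Gradient

section Viscosity

variable {E : Type*} [NormedAddCommGroup E] [InnerProductSpace ℝ E]

/-- The viscosity subsolution test at the single point `x` for the discounted equation
`F(x, Dw) + c w = ρ(x)`. The pointwise form is what survives when `F` has good properties only
near `x`. -/
def IsViscositySubAt [CompleteSpace E] (F : E → E → ℝ) (c : ℝ) (w ρ : E → ℝ) (x : E) : Prop :=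
  ∀ φ : E → ℝ, ContDiff ℝ 1 φ → IsLocalMax (fun t => w t - φ t) x →
    F x (gradient φ x) + c * w x ≤ ρ x

/-- The viscosity supersolution test at the single point `x` for the discounted equation
`F(x, Dw) + c w = ρ(x)`. -/
def IsViscositySuperAt [CompleteSpace E] (F : E → E → ℝ) (c : ℝ) (w ρ : E → ℝ) (x : E) : Prop :=
  ∀ φ : E → ℝ, ContDiff ℝ 1 φ → IsLocalMin (fun t => w t - φ t) x →
    ρ x ≤ F x (gradient φ x) + c * w x

variable {F : E → E → ℝ} {c : ℝ} {a b g h : E → ℝ} {z : E}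

theorem IsViscositySubAt.const_mul [CompleteSpace E] (ha : IsViscositySubAt F c a g z)
    {l : ℝ} (hl : 0 < l) (hF : ∀ p, F z (l • p) ≤ l * F z p) :
    IsViscositySubAt F c (fun x => l * a x) (fun x => l * g x) z := by
  intro φ hφ hmax
  have hgrad : gradient (fun t => l⁻¹ * φ t) z = l⁻¹ • gradient φ z :=
    (hasGradientAt_const_mul l⁻¹ (hφ.differentiable one_ne_zero z).hasGradientAt).gradient
  have hmax' : IsLocalMax (fun t => a t - l⁻¹ * φ t) z := by
    filter_upwards [hmax] with t ht
    have hscaled := mul_le_mul_of_nonneg_left ht (inv_nonneg.2 hl.le)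
    simpa only [mul_sub, inv_mul_cancel_left₀ hl.ne'] using hscaled
  have htest := ha _ (contDiff_const.mul hφ) hmax'
  rw [hgrad] at htest
  have hhom := hF (l⁻¹ • gradient φ z)
  rw [smul_inv_smul₀ hl.ne'] at hhom
  linarith [mul_le_mul_of_nonneg_left htest hl.le]

theorem IsViscositySubAt.le_of_isLocalMax_quadratic [CompleteSpace E] {x y : E} {k : ℝ}
    (ha : IsViscositySubAt F c a g x)
    (hmax : IsLocalMax (fun t => a t - (k * ‖t - y‖ ^ 2 + ‖t - z‖ ^ 2)) x) :
    F x (k • (2 : ℝ) • (x - y) + (2 : ℝ) • (x - z)) + c * a x ≤ g x := by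
  have hgrad := (hasGradientAt_add (hasGradientAt_const_mul k (hasGradientAt_norm_sub_sq x y))
    (hasGradientAt_norm_sub_sq x z)).gradient
  simpa only [hgrad] using ha _
    ((contDiff_const.mul (contDiff_norm_sub_sq y)).add (contDiff_norm_sub_sq z)) hmax

theorem IsViscositySuperAt.le_of_isLocalMin_quadratic [CompleteSpace E] {x y : E} {k : ℝ}
    (hb : IsViscositySuperAt F c b h y)
    (hmin : IsLocalMin (fun t => b t - -k * ‖t - x‖ ^ 2) y) :
    h y ≤ F y (k • (2 : ℝ) • (x - y)) + c * b y := by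
  have hgrad := (hasGradientAt_const_mul (-k) (hasGradientAt_norm_sub_sq y x)).gradient
  have hflip : -k • (2 : ℝ) • (y - x) = k • (2 : ℝ) • (x - y) := by module
  simpa only [hgrad, hflip] using hb _ (contDiff_const.mul (contDiff_norm_sub_sq x)) hmin

theorem exists_doubling_slopes [ProperSpace E]
    (ha : UpperSemicontinuous a) (hb : LowerSemicontinuous b)
    (hsub : ∀ᶠ x in 𝓝 z, IsViscositySubAt F c a g x)
    (hsuper : ∀ᶠ y in 𝓝 z, IsViscositySuperAt F c b h y)
    (hz : IsLocalMax (fun x => a x - b x) z) :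
    ∃ x y p p' : ℕ → E, Tendsto x atTop (𝓝 z) ∧ Tendsto y atTop (𝓝 z) ∧
      Tendsto (fun k => p' k - p k) atTop (𝓝 0) ∧ ∀ᶠ k in atTop,
        F (x k) (p k) + c * a (x k) ≤ g (x k) ∧ h (y k) ≤ F (y k) (p' k) + c * b (y k) ∧
        a z - b z ≤ a (x k) - b (y k) := by
  obtain ⟨x, y, hx, hy, hxy⟩ := exists_doubling_sequences ha hb hz
  refine ⟨x, y, fun k => (k : ℝ) • (2 : ℝ) • (x k - y k) + (2 : ℝ) • (x k - z),
    fun k => (k : ℝ) • (2 : ℝ) • (x k - y k), hx, hy, ?_, ?_⟩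
  · simpa using ((hx.sub_const z).const_smul (2 : ℝ)).neg
  · filter_upwards [hx.eventually hsub, hy.eventually hsuper, hxy] with k hsub_k hsuper_k hk
    exact ⟨hsub_k.le_of_isLocalMax_quadratic hk.1,
      hsuper_k.le_of_isLocalMin_quadratic hk.2.1, hk.2.2⟩

theorem add_mul_sub_le_of_isLocalMax [ProperSpace E]
    (hF : Continuous fun q : E × E => F q.1 q.2)
    (hF_coer : ∀ M : ℝ, ∃ r : ℝ, ∀ᶠ x in 𝓝 z, ∀ p : E, r ≤ ‖p‖ → M ≤ F x p) (hc : 0 ≤ c)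
    (ha : UpperSemicontinuous a) (hb : LowerSemicontinuous b)
    (hg : UpperSemicontinuousAt g z) (hh : LowerSemicontinuousAt h z)
    (hsub : ∀ᶠ x in 𝓝 z, IsViscositySubAt F c a g x)
    (hsuper : ∀ᶠ y in 𝓝 z, IsViscositySuperAt F c b h y)
    (hz : IsLocalMax (fun x => a x - b x) z) :
    h z + c * (a z - b z) ≤ g z := by
  obtain ⟨x, y, p, p', hx, hy, hpp', hineq⟩ := exists_doubling_slopes ha hb hsub hsuper hz
  have hp_bdd : ∃ r, ∀ᶠ k in atTop, p k ∈ Metric.closedBall (0 : E) r := by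
    obtain ⟨r, hr⟩ := hF_coer (g z + 1 - c * (a z - 1))
    refine ⟨r, ?_⟩
    filter_upwards [hineq, hx.eventually hr, hx.eventually (hg (g z + 1) (by linarith)),
      hy.eventually (hb z (b z - 1) (by linarith))] with k ⟨hsub_k, _, hk⟩ hr_k hg_k hb_k
    rw [mem_closedBall_zero_iff]
    by_contra! hlarge
    have hax : c * (a z - 1) ≤ c * a (x k) := mul_le_mul_of_nonneg_left (by linarith) hc
    linarith [hr_k (p k) hlarge.le]
  obtain ⟨r, hr⟩ := hp_bdd
  have hF_diff : Tendsto (fun k => F (y k) (p' k) - F (x k) (p k)) atTop (𝓝 0) := by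
    refine tendsto_sub_comp_of_mem_compact (f := fun q : E × E => F q.1 q.2)
      ((isCompact_closedBall z 1).prod (isCompact_closedBall (0 : E) r))
      (fun _ _ => hF.continuousAt) (a := fun k => (x k, p k)) (b := fun k => (y k, p' k))
      ((hx.eventually (Metric.closedBall_mem_nhds z one_pos)).and hr) ?_
    simpa [Prod.zero_eq_mk] using (hy.sub hx).prodMk_nhds hpp'
  refine le_of_forall_pos_le_add fun ε hε => ?_
  obtain ⟨k, ⟨hsub_k, hsuper_k, hk⟩, hF_k, hg_k, hh_k⟩ := (hineq.and
    ((hF_diff.eventually_lt_const (show (0 : ℝ) < ε / 3 by positivity)).and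
      ((hx.eventually (hg (g z + ε / 3) (by linarith))).and
        (hy.eventually (hh (h z - ε / 3) (by linarith)))))).exists
  linarith [mul_le_mul_of_nonneg_left hk hc]

end Viscosity

section Torus

theorem exists_isCompact_forall_add_intVec_mem (n : ℕ) :
    ∃ K : Set (En n), IsCompact K ∧ ∀ x, ∃ k : Fin n → ℤ, x + intVec n k ∈ K := by
  refine ⟨WithLp.toLp 2 '' univ.pi fun _ => Icc 0 1,
    (isCompact_univ_pi fun _ => isCompact_Icc).image (PiLp.continuous_toLp 2 _), fun x =>
    ⟨fun i => -⌊x i⌋, fun i => Int.fract (x i),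
      fun i _ => ⟨Int.fract_nonneg _, (Int.fract_lt_one _).le⟩, ?_⟩⟩
  ext i
  simp [intVec, Int.fract, sub_eq_add_neg]

theorem ZPeriodic.exists_forall_le {n : ℕ} {g : En n → ℝ} (hper : ZPeriodic g)
    (hg : UpperSemicontinuous g) : ∃ z, ∀ x, g x ≤ g z := by
  obtain ⟨K, hK, hKper⟩ := exists_isCompact_forall_add_intVec_mem n
  obtain ⟨k₀, hk₀⟩ := hKper 0
  obtain ⟨z, -, hz⟩ := (hg.upperSemicontinuousOn K).exists_isMaxOn ⟨_, hk₀⟩ hK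
  refine ⟨z, fun x => ?_⟩
  obtain ⟨k, hk⟩ := hKper x
  exact hper x k ▸ isMaxOn_iff.1 hz _ hk

theorem ZPeriodic.bddBelow_range {n : ℕ} {v : En n → ℝ} (hper : ZPeriodic v)
    (hv : LowerSemicontinuous v) : BddBelow (range v) := by
  obtain ⟨z, hz⟩ := ZPeriodic.exists_forall_le (g := fun x => -v x)
    (fun x k => congrArg Neg.neg (hper x k)) (upperSemicontinuous_neg hv)
  exact ⟨v z, forall_mem_range.2 fun x => neg_le_neg_iff.1 (hz x)⟩

end Torus

section System

variable {n : ℕ}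

theorem StatSubIneq.isViscositySubAt {F : En n → En n → ℝ} {c : ℝ} {w wo f : En n → ℝ}
    (hw : StatSubIneq F c w wo f) (x : En n) :
    IsViscositySubAt F c w (fun t => f t + c * wo t) x := fun φ hφ hmax => by
  linarith [hw φ hφ x hmax]

theorem StatSuperIneq.isViscositySuperAt {F : En n → En n → ℝ} {c : ℝ} {v vo f : En n → ℝ}
    (hv : StatSuperIneq F c v vo f) (x : En n) :
    IsViscositySuperAt F c v (fun t => f t + c * vo t) x := fun φ hφ hmin => by
  linarith [hv φ hφ x hmin]

theorem coupled_le_zero_of_isLocalMax {F : En n → En n → ℝ} {f w wo v vo : En n → ℝ} {c l : ℝ}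
    {z : En n} (hF : Continuous fun q : En n × En n => F q.1 q.2) (hF_coer : Coercive F)
    (hf : Continuous f) (hc : 0 ≤ c) (hl : 0 < l)
    (hF_scale : ∀ᶠ x in 𝓝 z, ∀ p, F x (l • p) ≤ l * F x p)
    (hw : UpperSemicontinuous w) (hwo : UpperSemicontinuous wo)
    (hv : LowerSemicontinuous v) (hvo : LowerSemicontinuous vo)
    (hsub : StatSubIneq F c w wo f) (hsuper : StatSuperIneq F c v vo f)
    (hz : IsLocalMax (fun x => l * w x - v x) z) :
    (1 - l) * f z + c * ((l * w z - v z) - (l * wo z - vo z)) ≤ 0 := by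
  have hscaled : ∀ᶠ x in 𝓝 z,
      IsViscositySubAt F c (fun t => l * w t) (fun t => l * (f t + c * wo t)) x :=
    hF_scale.mono fun x hx => (hsub.isViscositySubAt x).const_mul hl hx
  have hrhs_usc : UpperSemicontinuous fun t => l * (f t + c * wo t) :=
    upperSemicontinuous_const_mul hl.le
      (hf.upperSemicontinuous.add (upperSemicontinuous_const_mul hc hwo))
  have hrhs_lsc : LowerSemicontinuous fun t => f t + c * vo t :=
    hf.lowerSemicontinuous.add (lowerSemicontinuous_const_mul hc hvo)
  have hcompare := add_mul_sub_le_of_isLocalMax hF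
    (fun M => (hF_coer M).imp fun _ hr => .of_forall hr) hc
    (upperSemicontinuous_const_mul hl.le hw) hv (hrhs_usc z) (hrhs_lsc z) hscaled
    (.of_forall hsuper.isViscositySuperAt) hz
  linarith

theorem eq_zero_of_coupled_le_zero {s α β c₁ c₂ θ₁ θ₂ : ℝ} (hs : 0 < s) (hα : 0 ≤ α)
    (hβ : 0 ≤ β) (hc₁ : 0 < c₁) (hc₂ : 0 < c₂)
    (h₁ : θ₂ ≤ θ₁ → s * α + c₁ * (θ₁ - θ₂) ≤ 0)
    (h₂ : θ₁ ≤ θ₂ → s * β + c₂ * (θ₂ - θ₁) ≤ 0) : α = 0 ∧ β = 0 := by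
  have hsα : 0 ≤ s * α := mul_nonneg hs.le hα
  have hsβ : 0 ≤ s * β := mul_nonneg hs.le hβ
  obtain rfl : θ₁ = θ₂ := by
    rcases le_total θ₂ θ₁ with hle | hle
    · have : θ₁ - θ₂ ≤ 0 := nonpos_of_mul_nonpos_right (by linarith [h₁ hle]) hc₁
      linarith
    · have : θ₂ - θ₁ ≤ 0 := nonpos_of_mul_nonpos_right (by linarith [h₂ hle]) hc₂
      linarith
  have hα' : s * α = 0 := le_antisymm (by simpa using h₁ le_rfl) hsα
  have hβ' : s * β = 0 := le_antisymm (by simpa using h₂ le_rfl) hsβ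
  exact ⟨(mul_eq_zero.1 hα').resolve_left hs.ne', (mul_eq_zero.1 hβ').resolve_left hs.ne'⟩

theorem isLocalMax_left_of_isLocalMax_max {X β : Type*} [TopologicalSpace X] [LinearOrder β]
    {θ₁ θ₂ : X → β} {z : X} (hz : IsLocalMax (fun x => max (θ₁ x) (θ₂ x)) z) (hle : θ₂ z ≤ θ₁ z) :
    IsLocalMax θ₁ z := by
  filter_upwards [hz] with x hx
  exact (le_max_left _ _).trans (hx.trans_eq (max_eq_left hle))

theorem eq_zero_of_isLocalMax_max {F₁ F₂ : En n → En n → ℝ} {f₁ f₂ u₁ u₂ v₁ v₂ : En n → ℝ}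
    {c₁ c₂ l : ℝ} {z : En n}
    (hF₁ : Continuous fun q : En n × En n => F₁ q.1 q.2)
    (hF₂ : Continuous fun q : En n × En n => F₂ q.1 q.2)
    (hF₁_coer : Coercive F₁) (hF₂_coer : Coercive F₂)
    (hf₁ : Continuous f₁) (hf₂ : Continuous f₂) (hf₁z : 0 ≤ f₁ z) (hf₂z : 0 ≤ f₂ z)
    (hc₁ : 0 < c₁) (hc₂ : 0 < c₂) (hl₀ : 0 < l) (hl₁ : l < 1)
    (hscale : ∀ x, ¬(f₁ x = 0 ∧ f₂ x = 0) → ∀ p,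
      F₁ x (l • p) ≤ l * F₁ x p ∧ F₂ x (l • p) ≤ l * F₂ x p)
    (hu₁ : UpperSemicontinuous u₁) (hu₂ : UpperSemicontinuous u₂)
    (hv₁ : LowerSemicontinuous v₁) (hv₂ : LowerSemicontinuous v₂)
    (hsub : CellSub F₁ F₂ c₁ c₂ u₁ u₂ f₁ f₂) (hsuper : CellSuper F₁ F₂ c₁ c₂ v₁ v₂ f₁ f₂)
    (hz : IsLocalMax (fun x => max (l * u₁ x - v₁ x) (l * u₂ x - v₂ x)) z) :
    f₁ z = 0 ∧ f₂ z = 0 := by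
  by_contra hzA
  have hclosed : IsClosed {x | f₁ x = 0 ∧ f₂ x = 0} :=
    (isClosed_eq hf₁ continuous_const).inter (isClosed_eq hf₂ continuous_const)
  have hnear : ∀ᶠ x in 𝓝 z, ¬(f₁ x = 0 ∧ f₂ x = 0) := hclosed.isOpen_compl.mem_nhds hzA
  refine hzA (eq_zero_of_coupled_le_zero (sub_pos.2 hl₁) hf₁z hf₂z hc₁ hc₂
    (θ₁ := l * u₁ z - v₁ z) (θ₂ := l * u₂ z - v₂ z) (fun hle => ?_) (fun hle => ?_))
  · exact coupled_le_zero_of_isLocalMax hF₁ hF₁_coer hf₁ hc₁.le hl₀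
      (hnear.mono fun x hx p => (hscale x hx p).1) hu₁ hu₂ hv₁ hv₂ hsub.1 hsuper.1
      (isLocalMax_left_of_isLocalMax_max hz hle)
  · simp only [max_comm (l * u₁ _ - v₁ _)] at hz
    exact coupled_le_zero_of_isLocalMax hF₂ hF₂_coer hf₂ hc₂.le hl₀
      (hnear.mono fun x hx p => (hscale x hx p).2) hu₂ hu₁ hv₂ hv₁ hsub.2 hsuper.2
      (isLocalMax_left_of_isLocalMax_max hz hle)

theorem mul_sub_le_one_sub_mul_neg {l u v m : ℝ} (hl₀ : 0 ≤ l) (hl₁ : l ≤ 1) (huv : u ≤ v)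
    (hmv : m ≤ v) : l * u - v ≤ (1 - l) * -m := by
  linarith [mul_le_mul_of_nonneg_left huv hl₀,
    mul_le_mul_of_nonneg_left hmv (sub_nonneg.2 hl₁)]

theorem le_of_eventually_mul_sub_le {u v V : ℝ}
    (h : ∀ᶠ l in 𝓝[<] (1 : ℝ), l * u - v ≤ (1 - l) * V) : u ≤ v := by
  have hlim (φ : ℝ → ℝ) (hφ : Continuous φ) : Tendsto φ (𝓝[<] 1) (𝓝 (φ 1)) :=
    (hφ.tendsto 1).mono_left nhdsWithin_le_nhds
  have hle := le_of_tendsto_of_tendsto (hlim (fun l => l * u - v) (by fun_prop))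
    (hlim (fun l => (1 - l) * V) (by fun_prop)) h
  linarith

theorem stmt6_general {F₁ F₂ : En n → En n → ℝ} {f₁ f₂ u₁ u₂ v₁ v₂ : En n → ℝ} {c₁ c₂ : ℝ}
    (hF₁ : Continuous fun q : En n × En n => F₁ q.1 q.2)
    (hF₂ : Continuous fun q : En n × En n => F₂ q.1 q.2)
    (hF₁_coer : Coercive F₁) (hF₂_coer : Coercive F₂)
    (hf₁ : Continuous f₁) (hf₂ : Continuous f₂)
    (hf₁_nonneg : ∀ x, 0 ≤ f₁ x) (hf₂_nonneg : ∀ x, 0 ≤ f₂ x) (hc₁ : 0 < c₁) (hc₂ : 0 < c₂)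
    (hscale : ∀ᶠ l in 𝓝[<] (1 : ℝ), ∀ x, ¬(f₁ x = 0 ∧ f₂ x = 0) → ∀ p,
      F₁ x (l • p) ≤ l * F₁ x p ∧ F₂ x (l • p) ≤ l * F₂ x p)
    (hu₁_per : ZPeriodic u₁) (hu₂_per : ZPeriodic u₂)
    (hv₁_per : ZPeriodic v₁) (hv₂_per : ZPeriodic v₂)
    (hu₁ : UpperSemicontinuous u₁) (hu₂ : UpperSemicontinuous u₂)
    (hv₁ : LowerSemicontinuous v₁) (hv₂ : LowerSemicontinuous v₂)
    (hsub : CellSub F₁ F₂ c₁ c₂ u₁ u₂ f₁ f₂) (hsuper : CellSuper F₁ F₂ c₁ c₂ v₁ v₂ f₁ f₂)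
    (hbdry : ∀ x, f₁ x = 0 → f₂ x = 0 → u₁ x ≤ v₁ x ∧ u₂ x ≤ v₂ x) (x : En n) :
    u₁ x ≤ v₁ x ∧ u₂ x ≤ v₂ x := by
  obtain ⟨m₁, hm₁⟩ := hv₁_per.bddBelow_range hv₁
  obtain ⟨m₂, hm₂⟩ := hv₂_per.bddBelow_range hv₂
  suffices hcontracted : ∀ᶠ l in 𝓝[<] (1 : ℝ),
      max (l * u₁ x - v₁ x) (l * u₂ x - v₂ x) ≤ (1 - l) * -min m₁ m₂ from
    ⟨le_of_eventually_mul_sub_le (hcontracted.mono fun _ h => (max_le_iff.1 h).1),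
      le_of_eventually_mul_sub_le (hcontracted.mono fun _ h => (max_le_iff.1 h).2)⟩
  filter_upwards [hscale, self_mem_nhdsWithin, nhdsWithin_le_nhds (lt_mem_nhds one_pos)]
    with l hscale_l (hl₁ : l < 1) hl₀
  obtain ⟨z, hz⟩ := ZPeriodic.exists_forall_le
    (g := fun x => max (l * u₁ x - v₁ x) (l * u₂ x - v₂ x))
    (fun x k => by
      simp only [hu₁_per x k, hu₂_per x k, hv₁_per x k, hv₂_per x k])
    ((upperSemicontinuous_sub (upperSemicontinuous_const_mul hl₀.le hu₁) hv₁).sup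
      (upperSemicontinuous_sub (upperSemicontinuous_const_mul hl₀.le hu₂) hv₂))
  obtain ⟨hf₁z, hf₂z⟩ := eq_zero_of_isLocalMax_max hF₁ hF₂ hF₁_coer hF₂_coer hf₁ hf₂
    (hf₁_nonneg z) (hf₂_nonneg z) hc₁ hc₂ hl₀ hl₁ hscale_l hu₁ hu₂ hv₁ hv₂ hsub hsuper
    (.of_forall hz)
  obtain ⟨huv₁, huv₂⟩ := hbdry z hf₁z hf₂z
  exact (hz x).trans (max_le
    (mul_sub_le_one_sub_mul_neg hl₀.le hl₁.le huv₁ (min_le_of_left_le (hm₁ ⟨z, rfl⟩)))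
    (mul_sub_le_one_sub_mul_neg hl₀.le hl₁.le huv₂ (min_le_of_right_le (hm₂ ⟨z, rfl⟩))))

end System

/-- Comparison principle for the stationary problem (S1) with the zero set A = {f1 = 0} ∩ {f2 = 0} playing the role of the boundary (Theorem 3.2). -/

theorem stmt6 (n : ℕ) (hn : 1 ≤ n)
(F₁ F₂ : En n → En n → ℝ) (f₁ f₂ : En n → ℝ)
    (hF₁cont : Continuous fun q : En n × En n => F₁ q.1 q.2)
    (hF₂cont : Continuous fun q : En n × En n => F₂ q.1 q.2)
    (hF₁per : ZPeriodicH F₁) (hF₂per : ZPeriodicH F₂)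
    (hF₁coer : Coercive F₁) (hF₂coer : Coercive F₂)
    (hf₁cont : Continuous f₁) (hf₂cont : Continuous f₂)
    (hf₁per : ZPeriodic f₁) (hf₂per : ZPeriodic f₂)
    -- (A2)
    (hA2 : ∀ x : En n, 0 ≤ f₁ x ∧ 0 ≤ f₂ x)
    -- (A3)
    (hA3 : ∃ x : En n, f₁ x = 0 ∧ f₂ x = 0)
    -- (A4)
    (hA4 : ∃ lam₀ : ℝ, 0 < lam₀ ∧ lam₀ < 1 ∧
      ∀ lam : ℝ, lam₀ ≤ lam → lam ≤ 1 → ∀ x : En n, ¬(f₁ x = 0 ∧ f₂ x = 0) →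
        ∀ p : En n, F₁ x (lam • p) ≤ lam * F₁ x p ∧ F₂ x (lam • p) ≤ lam * F₂ x p)
    -- (A5)
    (hA5 : (∀ (x p : En n), 0 ≤ F₁ x p ∧ 0 ≤ F₂ x p) ∧ ∀ x : En n, F₁ x 0 = 0 ∧ F₂ x 0 = 0)
    (u₁ u₂ v₁ v₂ : En n → ℝ)
    (hu₁per : ZPeriodic u₁) (hu₂per : ZPeriodic u₂)
    (hv₁per : ZPeriodic v₁) (hv₂per : ZPeriodic v₂)
    (hu₁usc : UpperSemicontinuous u₁) (hu₂usc : UpperSemicontinuous u₂)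
    (hv₁lsc : LowerSemicontinuous v₁) (hv₂lsc : LowerSemicontinuous v₂)
    (hsub : CellSub F₁ F₂ 1 1 u₁ u₂ f₁ f₂)
    (hsuper : CellSuper F₁ F₂ 1 1 v₁ v₂ f₁ f₂)
    (hbdry : ∀ x : En n, f₁ x = 0 → f₂ x = 0 → u₁ x ≤ v₁ x ∧ u₂ x ≤ v₂ x) :
    ∀ x : En n, u₁ x ≤ v₁ x ∧ u₂ x ≤ v₂ x := by
  obtain ⟨_, -, hlam₀, hscale⟩ := hA4
  exact stmt6_general hF₁cont hF₂cont hF₁coer hF₂coer hf₁cont hf₂cont (fun x => (hA2 x).1)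
    (fun x => (hA2 x).2) one_pos one_pos
    (mem_of_superset (Ico_mem_nhdsLT hlam₀) fun l hl => hscale l hl.1 hl.2.le)
    hu₁per hu₂per hv₁per hv₂per hu₁usc hu₂usc hv₁lsc hv₂lsc hsub hsuper hbdry
end

section
/- (Monotonicity Property 1.) Assume H_i(x,p) = F_i(x,p) − f_i(x) with F_i, f_i satisfying (A1)–(A5), and let (u₁, u₂) be the viscosity solution of (C) with Lipschitz continuous initial data (u₀₁, u₀₂). Set U(x,t) := u₁(x,t) + u₂(x,t). Then for every x ∈ 𝒜, the function t ↦ U(x,t) is nonincreasing on [0,∞). -/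
open MeasureTheory Filter Topology Set

/-!
Since `Hᵢ ≥ -fᵢ`, dropping the gradient term from the `i`-th equation leaves
`∂ₜuᵢ ≤ fᵢ + uⱼ - uᵢ` in the viscosity sense. This inequality involves no space derivative and
survives restriction to the line `{x} × (0, ∞)`: a strict maximum along the line is approximated
by maxima in space-time after subtracting the penalty `N |y - x|²`. On the line, a viscosity
inequality `g' ≤ k` with continuous `k` says that `g - ∫ k` is nonincreasing. Adding the two
inequalities cancels the coupling terms, so `u₁ + u₂ - (f₁ x + f₂ x) t` is nonincreasing.
-/

section Penalization

variable {X Y : Type*} [PseudoMetricSpace X] [ProperSpace X] [PseudoMetricSpace Y] [ProperSpace Y]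
  {w : X × Y → ℝ} {x : X} {y : Y}

lemma exists_isLocalMax_sub_mul_dist_sq_of_lt_on_sphere {r ρ : ℝ} (hr : 0 < r) (hρ : 0 < ρ)
    (hw : ContinuousOn w (Metric.closedBall x r ×ˢ Metric.closedBall y ρ))
    (hlt : ∀ x' ∈ Metric.closedBall x r, ∀ y' ∈ Metric.sphere y ρ, w (x', y') < w (x, y)) :
    ∃ N : ℝ, ∃ q ∈ Metric.ball x r ×ˢ Metric.ball y ρ,
      IsLocalMax (fun q => w q - N * dist q.1 x ^ 2) q := by
  have hcompact : IsCompact (Metric.closedBall x r ×ˢ Metric.closedBall y ρ) :=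
    (isCompact_closedBall x r).prod (isCompact_closedBall y ρ)
  have hcenter : (x, y) ∈ Metric.closedBall x r ×ˢ Metric.closedBall y ρ :=
    ⟨Metric.mem_closedBall_self hr.le, Metric.mem_closedBall_self hρ.le⟩
  obtain ⟨C, hC⟩ := hcompact.bddAbove_image hw
  have hwC : ∀ q ∈ Metric.closedBall x r ×ˢ Metric.closedBall y ρ, w q ≤ C :=
    fun q hq => hC (mem_image_of_mem w hq)
  have hN : 0 ≤ (C - w (x, y) + 1) / r ^ 2 :=
    div_nonneg (by linarith [hwC _ hcenter]) (by positivity)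
  have hNr : (C - w (x, y) + 1) / r ^ 2 * r ^ 2 = C - w (x, y) + 1 :=
    div_mul_cancel₀ _ (by positivity)
  refine ⟨(C - w (x, y) + 1) / r ^ 2, hcompact.exists_isLocalMax_mem_open
    (prod_mono Metric.ball_subset_closedBall Metric.ball_subset_closedBall)
    (by fun_prop) hcenter ?_ (Metric.isOpen_ball.prod Metric.isOpen_ball)⟩
  rintro ⟨x', y'⟩ ⟨hbox, hboundary⟩
  simp only [dist_self, ne_eq, OfNat.ofNat_ne_zero, not_false_eq_true, zero_pow, mul_zero, sub_zero]
  rcases (Metric.mem_closedBall.1 hbox.1).eq_or_lt with hx' | hx'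
  · rw [hx', hNr]
    linarith [hwC _ hbox]
  · have hy' : dist y' y = ρ :=
      (Metric.mem_closedBall.1 hbox.2).eq_of_not_lt fun hy' => hboundary ⟨hx', hy'⟩
    linarith [hlt x' hbox.1 y' hy', mul_nonneg hN (sq_nonneg (dist x' x))]

lemma exists_isLocalMax_sub_mul_dist_sq (hw : ∀ᶠ q in 𝓝 (x, y), ContinuousAt w q)
    (hstrict : ∀ᶠ y' in 𝓝[≠] y, w (x, y') < w (x, y)) {V : Set (X × Y)} (hV : V ∈ 𝓝 (x, y)) :
    ∃ N : ℝ, ∃ q ∈ V, IsLocalMax (fun q => w q - N * dist q.1 x ^ 2) q := by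
  obtain ⟨ρ₁, hρ₁, hbox⟩ := Metric.nhds_basis_closedBall.eventually_iff.1 (hw.and hV)
  obtain ⟨ρ₂, hρ₂, hslice⟩ :=
    Metric.nhds_basis_closedBall.eventually_iff.1 (eventually_nhdsWithin_iff.1 hstrict)
  set ρ := min ρ₁ ρ₂
  have hρ : 0 < ρ := lt_min hρ₁ hρ₂
  have hlt : ∀ᶠ x' in 𝓝 x, ∀ y' ∈ Metric.sphere y ρ, w (x', y') < w (x, y) := by
    refine (isCompact_sphere y ρ).eventually_forall_of_forall_eventually fun y' hy' => ?_
    have hdist : dist y' y = ρ := hy'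
    have hcont : ContinuousAt w (x, y') := (hbox (by
      rw [← closedBall_prod_same]
      exact ⟨Metric.mem_closedBall_self hρ₁.le, hdist.trans_le (min_le_left _ _)⟩)).1
    have hne : y' ≠ y := by
      rintro rfl
      exact hρ.ne (by rw [← hdist, dist_self])
    exact hcont.eventually_lt_const (hslice (hdist.trans_le (min_le_right _ _)) hne)
  obtain ⟨r₁, hr₁, hr₁lt⟩ := Metric.nhds_basis_closedBall.eventually_iff.1 hlt
  have hr : 0 < min r₁ ρ := lt_min hr₁ hρ
  have hsub : Metric.closedBall x (min r₁ ρ) ×ˢ Metric.closedBall y ρ ⊆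
      Metric.closedBall (x, y) ρ₁ := by
    rw [← closedBall_prod_same]
    exact prod_mono
      (Metric.closedBall_subset_closedBall ((min_le_right _ _).trans (min_le_left _ _)))
      (Metric.closedBall_subset_closedBall (min_le_left _ _))
  obtain ⟨N, q, hq, hmax⟩ := exists_isLocalMax_sub_mul_dist_sq_of_lt_on_sphere hr hρ
    (fun q hq => (hbox (hsub hq)).1.continuousWithinAt)
    fun x' hx' => hr₁lt (Metric.closedBall_subset_closedBall (min_le_left _ _) hx')
  exact ⟨N, q, (hbox (hsub
    (prod_mono Metric.ball_subset_closedBall Metric.ball_subset_closedBall hq))).2, hmax⟩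

end Penalization

lemma exists_contDiff_eqOn_deriv_Ici {k : ℝ → ℝ} {a : ℝ} (hk : ContinuousOn k (Ici a)) :
    ∃ K : ℝ → ℝ, ContDiff ℝ 1 K ∧ EqOn (deriv K) k (Ici a) := by
  have hext : Continuous fun t => k (max t a) :=
    hk.comp_continuous (by fun_prop) fun t => le_max_right t a
  have hderiv (t : ℝ) : HasDerivAt (fun t => ∫ r in a..t, k (max r a)) (k (max t a)) t :=
    hext.integral_hasStrictDerivAt a t |>.hasDerivAt
  refine ⟨_, contDiff_one_iff_deriv.2 ⟨fun t => (hderiv t).differentiableAt, ?_⟩, fun t ht => ?_⟩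
  · simpa only [funext fun t => (hderiv t).deriv] using hext
  · rw [(hderiv t).deriv, max_eq_left ht]

/-- The differential inequality `g' ≤ k` on `s ⊆ ℝ` in the viscosity sense. As in `EvolSubIneq`,
the test functions touching `g` from above are `C¹` on the whole line. -/
def ViscosityDerivLE (g k : ℝ → ℝ) (s : Set ℝ) : Prop :=
  ∀ φ : ℝ → ℝ, ContDiff ℝ 1 φ → ∀ t ∈ s, IsLocalMax (fun r => g r - φ r) t → deriv φ t ≤ k t

namespace ViscosityDerivLE

variable {g g₁ g₂ k K : ℝ → ℝ} {s : Set ℝ} {a : ℝ}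

lemma sub_antiderivative (h : ViscosityDerivLE g k s) (hK : ContDiff ℝ 1 K)
    (hderiv : EqOn (deriv K) k s) : ViscosityDerivLE (fun t => g t - K t) 0 s := by
  intro φ hφ t ht hmax
  have hsum : deriv (fun r => K r + φ r) t ≤ k t :=
    h _ (hK.add hφ) t ht (by simpa only [sub_sub] using hmax)
  rw [deriv_fun_add (hK.differentiable one_ne_zero t) (hφ.differentiable one_ne_zero t),
    hderiv ht] at hsum
  simpa using hsum

lemma antitoneOn_Ici (h : ViscosityDerivLE g 0 (Ioi a)) (hg : ContinuousOn g (Ici a)) :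
    AntitoneOn g (Ici a) := by
  intro r hr s _ hrs
  by_contra! hlt
  -- Subtract `δ exp (M (t - s))` with `δ` small and `M` large: the result is larger at `s` than at
  -- `r` and `s + 1`, so it has an interior maximum, where the exponential has positive slope.
  obtain ⟨δ, hδ, hδlt⟩ : ∃ δ > 0, δ < g s - g r := exists_between (sub_pos.2 hlt)
  obtain ⟨M, hMexp, hM⟩ : ∃ M : ℝ, (g (s + 1) - g s + δ) / δ < Real.exp M ∧ 0 < M :=
    ((Real.tendsto_exp_atTop.eventually_gt_atTop _).and (eventually_gt_atTop 0)).exists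
  have hMexp' : g (s + 1) - g s + δ < δ * Real.exp M := (div_lt_iff₀' hδ).1 hMexp
  set φ : ℝ → ℝ := fun t => δ * Real.exp (M * (t - s)) with hφ_def
  have hφ : ContDiff ℝ 1 φ := by fun_prop
  have hφderiv (t : ℝ) : deriv φ t = δ * (Real.exp (M * (t - s)) * (M * 1)) :=
    ((((hasDerivAt_id t).sub_const s).const_mul M).exp.const_mul δ).deriv
  have hφr : 0 < φ r := by positivity
  have hφs : φ s = δ := by simp [hφ_def]
  have hφs1 : φ (s + 1) = δ * Real.exp M := by simp [hφ_def]
  obtain ⟨t, ht, hmax⟩ : ∃ t ∈ Ioo r (s + 1), IsLocalMax (fun t => g t - φ t) t := by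
    refine isCompact_Icc.exists_isLocalMax_mem_open (z := s) Ioo_subset_Icc_self
      ((hg.mono fun t ht => hr.trans ht.1).sub hφ.continuous.continuousOn)
      ⟨hrs, by linarith⟩ (fun t ht => ?_) isOpen_Ioo
    rw [Icc_sdiff_Ioo_same (by linarith)] at ht
    rcases ht with rfl | rfl <;> linarith
  have hslope : deriv φ t ≤ 0 := h φ hφ t (hr.trans_lt ht.1) hmax
  have hpos : 0 < deriv φ t := by
    rw [hφderiv]
    positivity
  exact hslope.not_gt hpos

lemma antitoneOn_add_sub_mul {c : ℝ} (h₁ : ViscosityDerivLE g₁ k (Ioi a))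
    (h₂ : ViscosityDerivLE g₂ (fun t => c - k t) (Ioi a)) (hg₁ : ContinuousOn g₁ (Ici a))
    (hg₂ : ContinuousOn g₂ (Ici a)) (hk : ContinuousOn k (Ici a)) :
    AntitoneOn (fun t => g₁ t + g₂ t - c * t) (Ici a) := by
  obtain ⟨K, hK, hKderiv⟩ := exists_contDiff_eqOn_deriv_Ici hk
  have hL : ContDiff ℝ 1 fun t => c * t - K t := by fun_prop
  have hLderiv : EqOn (deriv fun t => c * t - K t) (fun t => c - k t) (Ici a) := fun t ht => by
    rw [deriv_fun_sub (by fun_prop) (hK.differentiable one_ne_zero t), hKderiv ht,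
      deriv_const_mul_id]
  have hanti₁ : AntitoneOn (fun t => g₁ t - K t) (Ici a) :=
    (h₁.sub_antiderivative hK (hKderiv.mono Ioi_subset_Ici_self)).antitoneOn_Ici
      (hg₁.sub hK.continuous.continuousOn)
  have hanti₂ : AntitoneOn (fun t => g₂ t - (c * t - K t)) (Ici a) :=
    (h₂.sub_antiderivative hL (hLderiv.mono Ioi_subset_Ici_self)).antitoneOn_Ici
      (hg₂.sub hL.continuous.continuousOn)
  exact (hanti₁.add hanti₂).congr fun t _ => by ring

end ViscosityDerivLE

lemma fderiv_zero_one_eq_deriv_slice {E F : Type*} [NormedAddCommGroup E] [NormedSpace ℝ E]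
    [NormedAddCommGroup F] [NormedSpace ℝ F] {φ : E × ℝ → F} {x : E} {t : ℝ}
    (hφ : DifferentiableAt ℝ φ (x, t)) :
    fderiv ℝ φ (x, t) (0, 1) = deriv (fun r => φ (x, r)) t :=
  (hφ.hasFDerivAt.comp_hasDerivAt t
    ((hasDerivAt_const t x).prodMk (hasDerivAt_id t))).deriv.symm

section System

variable {n : ℕ}

lemma EvolSubIneq.deriv_le_of_isLocalMax_sub_mul_dist_sq {H : En n → En n → ℝ} {f : En n → ℝ}
    {u uo : En n × ℝ → ℝ} (hsub : EvolSubIneq H u uo) (hH : ∀ y p, -f y ≤ H y p) {φ : ℝ → ℝ}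
    (hφ : ContDiff ℝ 1 φ) {x : En n} {N : ℝ} {q : En n × ℝ} (hq : 0 < q.2)
    (hmax : IsLocalMax (fun q => u q - φ q.2 - N * dist q.1 x ^ 2) q) :
    deriv φ q.2 ≤ f q.1 + uo q - u q := by
  have hΦ : ContDiff ℝ 1 fun q : En n × ℝ => φ q.2 + N * ‖q.1 - x‖ ^ 2 :=
    (hφ.comp contDiff_snd).add
      (contDiff_const.mul ((contDiff_fst.sub contDiff_const).norm_sq ℝ))
  have hineq := hsub _ hΦ q.1 q.2 hq (by simpa only [dist_eq_norm, sub_sub] using hmax)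
  rw [fderiv_zero_one_eq_deriv_slice (hΦ.differentiable one_ne_zero _)] at hineq
  simp only [deriv_add_const, Prod.mk.eta] at hineq
  linarith [hH q.1 (gradient (fun y => φ q.2 + N * ‖y - x‖ ^ 2) q.1)]

lemma EvolSubIneq.viscosityDerivLE_slice {H : En n → En n → ℝ} {f : En n → ℝ}
    {u uo : En n × ℝ → ℝ} {x : En n} (hsub : EvolSubIneq H u uo) (hH : ∀ y p, -f y ≤ H y p)
    (hf : UpperSemicontinuousAt f x) (hu : ContinuousOn u {q | 0 < q.2})
    (huo : ContinuousOn uo {q | 0 < q.2}) :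
    ViscosityDerivLE (fun t => u (x, t)) (fun t => f x + uo (x, t) - u (x, t)) (Ioi 0) := by
  intro φ hφ t₀ ht₀ hmax
  by_contra! hlt
  have hopen : IsOpen {q : En n × ℝ | 0 < q.2} := isOpen_lt continuous_const continuous_snd
  have hpos : ∀ᶠ q : En n × ℝ in 𝓝 (x, t₀), 0 < q.2 := hopen.mem_nhds ht₀
  -- The added square makes `t₀` a strict maximum without changing the slope there.
  set χ : ℝ → ℝ := fun t => φ t + (t - t₀) ^ 2 with hχ_def
  have hχ : ContDiff ℝ 1 χ := by fun_prop
  have hχderiv : deriv χ t₀ = deriv φ t₀ := by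
    simpa using ((hφ.differentiable one_ne_zero t₀).hasDerivAt.fun_add
      (((hasDerivAt_id' t₀).sub_const t₀).fun_pow 2)).deriv
  have hstrict : ∀ᶠ t in 𝓝[≠] t₀, u (x, t) - χ t < u (x, t₀) - χ t₀ := by
    filter_upwards [hmax.filter_mono nhdsWithin_le_nhds, self_mem_nhdsWithin] with t ht hne
    have hsq : 0 < (t - t₀) ^ 2 := sq_pos_of_ne_zero (sub_ne_zero.2 hne)
    simp only [hχ_def, sub_self, ne_eq, OfNat.ofNat_ne_zero, not_false_eq_true, zero_pow]
    linarith
  have hcont : ∀ᶠ q in 𝓝 (x, t₀), ContinuousAt (fun q : En n × ℝ => u q - χ q.2) q := by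
    filter_upwards [hpos] with q hq
    exact (hu.continuousAt (hopen.mem_nhds hq)).sub
      (hχ.continuous.comp continuous_snd).continuousAt
  have hnhds : ∀ᶠ q : En n × ℝ in 𝓝 (x, t₀), f q.1 + uo q - u q < deriv χ q.2 := by
    have husc : UpperSemicontinuousAt
        (fun q : En n × ℝ => f q.1 + (uo q - u q - deriv χ q.2)) (x, t₀) :=
      UpperSemicontinuousAt.add (hf.comp continuousAt_fst)
        (((huo.continuousAt (hopen.mem_nhds ht₀)).sub
          (hu.continuousAt (hopen.mem_nhds ht₀))).sub
          ((hχ.continuous_deriv le_rfl).comp continuous_snd).continuousAt).upperSemicontinuousAt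
    filter_upwards [husc 0 (by dsimp only; linarith)] with q hq
    linarith
  obtain ⟨N, q, ⟨hq, hqlt⟩, hqmax⟩ :=
    exists_isLocalMax_sub_mul_dist_sq hcont hstrict (hpos.and hnhds)
  exact hqlt.not_ge (hsub.deriv_le_of_isLocalMax_sub_mul_dist_sq hH hχ hq hqmax)

theorem stmt7_general {H₁ H₂ : En n → En n → ℝ} {f₁ f₂ : En n → ℝ} {u₁ u₂ : En n × ℝ → ℝ}
    {x : En n} (hH₁ : ∀ y p, -f₁ y ≤ H₁ y p) (hH₂ : ∀ y p, -f₂ y ≤ H₂ y p)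
    (hf₁ : UpperSemicontinuousAt f₁ x) (hf₂ : UpperSemicontinuousAt f₂ x)
    (hu₁ : ContinuousOn u₁ {q | 0 ≤ q.2}) (hu₂ : ContinuousOn u₂ {q | 0 ≤ q.2})
    (hsub : SysSub H₁ H₂ u₁ u₂) :
    AntitoneOn (fun t => u₁ (x, t) + u₂ (x, t) - (f₁ x + f₂ x) * t) (Ici 0) := by
  have hslice {u : En n × ℝ → ℝ} (hu : ContinuousOn u {q | 0 ≤ q.2}) :
      ContinuousOn (fun t => u (x, t)) (Ici 0) :=
    hu.comp (by fun_prop) fun _ ht => ht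
  have hpos : {q : En n × ℝ | 0 < q.2} ⊆ {q | 0 ≤ q.2} := ofPred_subset_ofPred.2 fun _ => le_of_lt
  have hderiv₁ := hsub.1.viscosityDerivLE_slice hH₁ hf₁ (hu₁.mono hpos) (hu₂.mono hpos)
  have hderiv₂ := hsub.2.viscosityDerivLE_slice hH₂ hf₂ (hu₂.mono hpos) (hu₁.mono hpos)
  have hcoupling (t : ℝ) : f₂ x + u₁ (x, t) - u₂ (x, t) =
      f₁ x + f₂ x - (f₁ x + u₂ (x, t) - u₁ (x, t)) := by ring
  simp only [hcoupling] at hderiv₂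
  exact hderiv₁.antitoneOn_add_sub_mul hderiv₂ (hslice hu₁) (hslice hu₂)
    ((continuousOn_const.add (hslice hu₂)).sub (hslice hu₁))

end System

/-- Monotonicity Property 1 (Proposition 3.3): on A, t ↦ (u1 + u2)(x,t) is nonincreasing. -/
theorem stmt7 (n : ℕ) (hn : 1 ≤ n)
(F₁ F₂ : En n → En n → ℝ) (f₁ f₂ : En n → ℝ)
    (hF₁cont : Continuous fun q : En n × En n => F₁ q.1 q.2)
    (hF₂cont : Continuous fun q : En n × En n => F₂ q.1 q.2)
    (hF₁per : ZPeriodicH F₁) (hF₂per : ZPeriodicH F₂)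
    (hF₁coer : Coercive F₁) (hF₂coer : Coercive F₂)
    (hf₁cont : Continuous f₁) (hf₂cont : Continuous f₂)
    (hf₁per : ZPeriodic f₁) (hf₂per : ZPeriodic f₂)
    -- (A2)
    (hA2 : ∀ x : En n, 0 ≤ f₁ x ∧ 0 ≤ f₂ x)
    -- (A3)
    (hA3 : ∃ x : En n, f₁ x = 0 ∧ f₂ x = 0)
    -- (A4)
    (hA4 : ∃ lam₀ : ℝ, 0 < lam₀ ∧ lam₀ < 1 ∧
      ∀ lam : ℝ, lam₀ ≤ lam → lam ≤ 1 → ∀ x : En n, ¬(f₁ x = 0 ∧ f₂ x = 0) →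
        ∀ p : En n, F₁ x (lam • p) ≤ lam * F₁ x p ∧ F₂ x (lam • p) ≤ lam * F₂ x p)
    -- (A5)
    (hA5 : (∀ (x p : En n), 0 ≤ F₁ x p ∧ 0 ≤ F₂ x p) ∧ ∀ x : En n, F₁ x 0 = 0 ∧ F₂ x 0 = 0)
    (u₀₁ u₀₂ : En n → ℝ) (hu₀₁ : IsLip u₀₁) (hu₀₂ : IsLip u₀₂)
    (hu₀₁per : ZPeriodic u₀₁) (hu₀₂per : ZPeriodic u₀₂)
    (u₁ u₂ : En n × ℝ → ℝ) (hu₁per : ZPeriodicST u₁) (hu₂per : ZPeriodicST u₂)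
    (hsol : SysSolution (fun x p => F₁ x p - f₁ x) (fun x p => F₂ x p - f₂ x) u₀₁ u₀₂ u₁ u₂) :
    ∀ x : En n, f₁ x = 0 → f₂ x = 0 → ∀ s t : ℝ, 0 ≤ s → s ≤ t →
      u₁ (x, t) + u₂ (x, t) ≤ u₁ (x, s) + u₂ (x, s) := by
  intro x hx₁ hx₂ s t hs hst
  obtain ⟨hu₁, hu₂, hsub, -⟩ := hsol
  simpa [hx₁, hx₂] using stmt7_general
    (fun y p => by linarith [(hA5.1 y p).1]) (fun y p => by linarith [(hA5.1 y p).2])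
    (hf₁cont.upperSemicontinuous x) (hf₂cont.upperSemicontinuous x) hu₁ hu₂ hsub
    hs (hs.trans hst) hst
end

section
/- (Monotonicity Property 2.) Assume H_i(x,p) = F_i(x,p) − f_i(x) with F_i, f_i satisfying (A1)–(A5), and let (u₁, u₂) be the viscosity solution of (C) with Lipschitz continuous initial data (u₀₁, u₀₂). Set V(x,t) := max{u₁(x,t), u₂(x,t)}. Then for every x ∈ 𝒜, the function t ↦ V(x,t) is nonincreasing on [0,∞). -/
open MeasureTheory Filter Topology Set

/-!
For `V = max u₁ u₂` the coupling term has a favourable sign: where `V - φ` has a local maximum, the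
larger of the two components satisfies `∂ₜφ ≤ -H`, and `H = F - f ≥ -f`. Near a common zero `x` of
`f₁` and `f₂` the function `V` therefore satisfies `∂ₜV ≤ η` in the viscosity sense for every
`η > 0`, with no information on its spatial gradient. If `V(x, t) > V(x, s) + η (t - s)`, then
subtracting a barrier `η (τ - s) + ε exp (k (τ - t))`, which is huge at some later time `T`, and a
steep paraboloid `K ‖y - x‖ ^ 2` forces an interior maximum with `∂ₜφ > η`, a contradiction. Letting
`η → 0` gives the monotonicity.
-/

section SpaceTime

variable {E : Type*}

theorem eventually_lt_of_upperSemicontinuousOn_prod {Y : Type*} [TopologicalSpace E]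
    [TopologicalSpace Y] {V : E × Y → ℝ} {U : Set E} {C : Set Y} {x : E} {t : Y} {c : ℝ}
    (hV : UpperSemicontinuousOn V (U ×ˢ C)) (hU : U ∈ 𝓝 x) (ht : t ∈ C) (hc : V (x, t) < c) :
    ∀ᶠ y in 𝓝 x, V (y, t) < c := by
  have hslice : UpperSemicontinuousOn (fun y => V (y, t)) U :=
    hV.comp (g := fun y => (y, t)) (by fun_prop) fun _ hy => ⟨hy, ht⟩
  simpa only [nhdsWithin_eq_nhds.2 hU] using hslice x (mem_of_mem_nhds hU) c hc

theorem isLocalMax_sub_of_le {X : Type*} [TopologicalSpace X] {u V φ : X → ℝ} {q : X}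
    (hmax : IsLocalMax (fun p => V p - φ p) q) (hle : ∀ p, u p ≤ V p) (heq : u q = V q) :
    IsLocalMax (fun p => u p - φ p) q := by
  filter_upwards [hmax] with p hp
  linarith [hle p]

theorem exists_isLocalMax_sub_mul_sq_norm {Y : Type*} [SeminormedAddCommGroup E] [ProperSpace E]
    [TopologicalSpace Y] {W : E × Y → ℝ} {C : Set Y} {x : E} {t : Y} {δ : ℝ} (hδ : 0 < δ)
    (hC : IsCompact C) (ht : t ∈ C)
    (hW : UpperSemicontinuousOn W (Metric.closedBall x δ ×ˢ C))
    (hbdry : ∀ y ∈ Metric.closedBall x δ, ∀ τ ∈ C \ interior C, W (y, τ) < W (x, t)) :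
    ∃ K : ℝ, ∃ q ∈ Metric.ball x δ ×ˢ interior C,
      IsLocalMax (fun p => W p - K * ‖p.1 - x‖ ^ 2) q := by
  have hcompact : IsCompact (Metric.closedBall x δ ×ˢ C) := (isCompact_closedBall x δ).prod hC
  have hcenter : (x, t) ∈ Metric.closedBall x δ ×ˢ C := ⟨Metric.mem_closedBall_self hδ.le, ht⟩
  obtain ⟨M, hM⟩ := hW.bddAbove_of_isCompact hcompact
  replace hM : ∀ p ∈ Metric.closedBall x δ ×ˢ C, W p ≤ M := fun p hp => hM (mem_image_of_mem W hp)
  let K : ℝ := (M - W (x, t) + 1) / δ ^ 2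
  have hK : 0 ≤ K := div_nonneg (by linarith [hM _ hcenter]) (sq_nonneg δ)
  have hKδ : K * δ ^ 2 = M - W (x, t) + 1 := div_mul_cancel₀ _ (by positivity)
  have husc : UpperSemicontinuousOn (fun p => W p - K * ‖p.1 - x‖ ^ 2)
      (Metric.closedBall x δ ×ˢ C) := by
    have hparab : Continuous fun p : E × Y => -(K * ‖p.1 - x‖ ^ 2) := by fun_prop
    simpa only [sub_eq_add_neg] using hW.add hparab.continuousOn.upperSemicontinuousOn
  obtain ⟨⟨y, τ⟩, ⟨hy, hτ⟩, hmax⟩ := husc.exists_isMaxOn ⟨_, hcenter⟩ hcompact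
  have hvalue : W (x, t) + K * ‖y - x‖ ^ 2 ≤ W (y, τ) := by
    have := hmax hcenter
    simp only [mem_ofPred_eq, sub_self, norm_zero] at this
    linarith
  have hy_ball : y ∈ Metric.ball x δ := by
    refine Metric.mem_ball.2 ((Metric.mem_closedBall.1 hy).lt_of_ne fun hsphere => ?_)
    rw [← dist_eq_norm, hsphere] at hvalue
    linarith [hM (y, τ) ⟨hy, hτ⟩]
  have hτ_interior : τ ∈ interior C := by
    by_contra hτ'
    have : 0 ≤ K * ‖y - x‖ ^ 2 := by positivity
    linarith [hbdry y hy τ ⟨hτ, hτ'⟩]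
  refine ⟨K, (y, τ), ⟨hy_ball, hτ_interior⟩, hmax.isLocalMax (prod_mem_nhds ?_ ?_)⟩
  · exact Metric.closedBall_mem_nhds_of_mem hy_ball
  · exact mem_interior_iff_mem_nhds.1 hτ_interior

theorem exists_contDiff_barrier {η ε s t T : ℝ} (B : ℝ) (hε : 0 < ε) (htT : t < T) :
    ∃ ψ : ℝ → ℝ, ContDiff ℝ 1 ψ ∧ (∀ τ, η < deriv ψ τ) ∧
      0 ≤ ψ s ∧ ψ t = η * (t - s) + ε ∧ B ≤ ψ T := by
  have hgrowth : Tendsto (fun k => η * (T - s) + ε * Real.exp (k * (T - t))) atTop atTop :=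
    tendsto_atTop_add_const_left _ _ <| (Real.tendsto_exp_atTop.comp <|
      tendsto_id.atTop_mul_const (sub_pos.2 htT)).const_mul_atTop hε
  obtain ⟨k, hk, hkB⟩ := ((eventually_gt_atTop 0).and (hgrowth.eventually_ge_atTop B)).exists
  refine ⟨fun τ => η * (τ - s) + ε * Real.exp (k * (τ - t)), by fun_prop, fun τ => ?_, ?_, ?_, hkB⟩
  · have hderiv : HasDerivAt (fun τ => η * (τ - s) + ε * Real.exp (k * (τ - t)))
        (η * 1 + ε * (Real.exp (k * (τ - t)) * (k * 1))) τ :=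
      (((hasDerivAt_id τ).sub_const s).const_mul η).add
        ((((hasDerivAt_id τ).sub_const t).const_mul k).exp.const_mul ε)
    rw [hderiv.deriv, mul_one]
    exact lt_add_of_pos_right η (by positivity)
  · simp only [sub_self, mul_zero, zero_add]
    positivity
  · simp only [sub_self, mul_zero, Real.exp_zero, mul_one]

theorem fderiv_comp_snd_add_comp_fst_apply_zero_one [NormedAddCommGroup E] [NormedSpace ℝ E]
    {ψ : ℝ → ℝ} {g : E → ℝ} {q : E × ℝ} (hψ : DifferentiableAt ℝ ψ q.2)
    (hg : DifferentiableAt ℝ g q.1) :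
    fderiv ℝ (fun p : E × ℝ => ψ p.2 + g p.1) q (0, 1) = deriv ψ q.2 := by
  have hfderiv : HasFDerivAt (fun p : E × ℝ => ψ p.2 + g p.1) _ q :=
    (hψ.hasFDerivAt.comp q hasFDerivAt_snd).add (hg.hasFDerivAt.comp q hasFDerivAt_fst)
  simp [hfderiv.fderiv]

/-- The inequality `∂ₜV ≤ η` on `Ω ⊆ E × ℝ` in the viscosity sense: it is tested only with `C¹`
functions touching `V` from above at a point of `Ω`, up to an additive constant. -/
def ViscTimeDerivLE [NormedAddCommGroup E] [NormedSpace ℝ E] (V : E × ℝ → ℝ) (η : ℝ)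
    (Ω : Set (E × ℝ)) : Prop :=
  ∀ φ : E × ℝ → ℝ, ContDiff ℝ 1 φ → ∀ q ∈ Ω, IsLocalMax (fun p => V p - φ p) q →
    fderiv ℝ φ q (0, 1) ≤ η

theorem ViscTimeDerivLE.mono [NormedAddCommGroup E] [NormedSpace ℝ E] {V : E × ℝ → ℝ} {η : ℝ}
    {Ω Ω' : Set (E × ℝ)} (hderiv : ViscTimeDerivLE V η Ω) (hΩ : Ω' ⊆ Ω) :
    ViscTimeDerivLE V η Ω' :=
  fun φ hφ q hq => hderiv φ hφ q (hΩ hq)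

variable [NormedAddCommGroup E] [InnerProductSpace ℝ E] [ProperSpace E] {V : E × ℝ → ℝ} {U : Set E}
  {x : E} {η s t T : ℝ}

theorem ViscTimeDerivLE.exists_deriv_le {ψ : ℝ → ℝ} (hderiv : ViscTimeDerivLE V η (U ×ˢ Ioo s T))
    (hV : UpperSemicontinuousOn V (U ×ˢ Icc s T)) (hU : U ∈ 𝓝 x) (hψ : ContDiff ℝ 1 ψ)
    (ht : t ∈ Icc s T) (hs_lt : V (x, s) - ψ s < V (x, t) - ψ t)
    (hT_lt : V (x, T) - ψ T < V (x, t) - ψ t) :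
    ∃ τ ∈ Ioo s T, deriv ψ τ ≤ η := by
  have hsT : s ≤ T := ht.1.trans ht.2
  have hW : UpperSemicontinuousOn (fun p => V p - ψ p.2) (U ×ˢ Icc s T) := by
    have hψ_snd : Continuous fun p : E × ℝ => -ψ p.2 := (hψ.continuous.comp continuous_snd).neg
    simpa only [sub_eq_add_neg] using hV.add hψ_snd.continuousOn.upperSemicontinuousOn
  have hs_near := eventually_lt_of_upperSemicontinuousOn_prod hW hU (left_mem_Icc.2 hsT) hs_lt
  have hT_near := eventually_lt_of_upperSemicontinuousOn_prod hW hU (right_mem_Icc.2 hsT) hT_lt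
  obtain ⟨δ, hδ, hball⟩ := Metric.nhds_basis_closedBall.eventually_iff.1
    ((eventually_mem_set.2 hU).and (hs_near.and hT_near))
  have hbdry : ∀ y ∈ Metric.closedBall x δ, ∀ τ ∈ Icc s T \ interior (Icc s T),
      V (y, τ) - ψ τ < V (x, t) - ψ t := by
    rw [interior_Icc, Icc_sdiff_Ioo_same hsT]
    rintro y hy τ (rfl | rfl)
    exacts [(hball hy).2.1, (hball hy).2.2]
  obtain ⟨K, q, ⟨hq_ball, hq_time⟩, hmax⟩ := exists_isLocalMax_sub_mul_sq_norm hδ isCompact_Icc ht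
    (hW.mono <| prod_mono_left fun y hy => (hball hy).1) hbdry
  rw [interior_Icc] at hq_time
  have hparab : ContDiff ℝ 1 fun y : E => K * ‖y - x‖ ^ 2 :=
    contDiff_const.mul ((contDiff_id.sub contDiff_const).norm_sq ℝ)
  have htest := hderiv (fun p => ψ p.2 + K * ‖p.1 - x‖ ^ 2)
    ((hψ.comp contDiff_snd).add (hparab.comp contDiff_fst)) q
    ⟨(hball (Metric.ball_subset_closedBall hq_ball)).1, hq_time⟩
    (by simpa only [sub_sub] using hmax)
  rw [fderiv_comp_snd_add_comp_fst_apply_zero_one (g := fun y => K * ‖y - x‖ ^ 2)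
    (hψ.differentiable one_ne_zero _) (hparab.differentiable one_ne_zero _)] at htest
  exact ⟨q.2, hq_time, htest⟩

theorem ViscTimeDerivLE.le_add_mul (hderiv : ViscTimeDerivLE V η (U ×ˢ Ioo s T))
    (hV : UpperSemicontinuousOn V (U ×ˢ Icc s T)) (hU : U ∈ 𝓝 x) (hst : s ≤ t) (htT : t < T) :
    V (x, t) ≤ V (x, s) + η * (t - s) := by
  by_contra! hlt
  obtain ⟨ε, hε, hε_lt⟩ := exists_between (sub_pos.2 hlt)
  obtain ⟨ψ, hψ, hψ_deriv, hψs, hψt, hψT⟩ := exists_contDiff_barrier (η := η) (s := s)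
    (V (x, T) - V (x, t) + η * (t - s) + ε + 1) hε htT
  obtain ⟨τ, -, hτ⟩ := hderiv.exists_deriv_le hV hU hψ ⟨hst, htT.le⟩ (by linarith) (by linarith)
  exact (hψ_deriv τ).not_ge hτ

end SpaceTime

section CoupledSystem

variable {n : ℕ} {H₁ H₂ : En n → En n → ℝ} {u₁ u₂ : En n × ℝ → ℝ}

theorem SysSub.viscTimeDerivLE_max {η : ℝ} {U : Set (En n)} (hsub : SysSub H₁ H₂ u₁ u₂)
    (hH₁ : ∀ y ∈ U, ∀ p, -η ≤ H₁ y p) (hH₂ : ∀ y ∈ U, ∀ p, -η ≤ H₂ y p) :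
    ViscTimeDerivLE (fun q => max (u₁ q) (u₂ q)) η (U ×ˢ Ioi 0) := by
  rintro φ hφ ⟨y, τ⟩ ⟨hy, hτ⟩ hmax
  rcases le_total (u₂ (y, τ)) (u₁ (y, τ)) with hle | hle
  · have hmax₁ : IsLocalMax (fun p => u₁ p - φ p) (y, τ) :=
      isLocalMax_sub_of_le hmax (fun _ => le_max_left _ _) (max_eq_left hle).symm
    linarith [hsub.1 φ hφ y τ hτ hmax₁, hH₁ y hy (gradient (fun z => φ (z, τ)) y)]
  · have hmax₂ : IsLocalMax (fun p => u₂ p - φ p) (y, τ) :=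
      isLocalMax_sub_of_le hmax (fun _ => le_max_right _ _) (max_eq_right hle).symm
    linarith [hsub.2 φ hφ y τ hτ hmax₂, hH₂ y hy (gradient (fun z => φ (z, τ)) y)]

theorem SysSub.max_le_add_mul {c s t : ℝ} {x : En n} (hsub : SysSub H₁ H₂ u₁ u₂)
    (hu₁ : UpperSemicontinuousOn u₁ {q | 0 ≤ q.2}) (hu₂ : UpperSemicontinuousOn u₂ {q | 0 ≤ q.2})
    (hH₁ : ∀ η > c, ∀ᶠ y in 𝓝 x, ∀ p, -η ≤ H₁ y p)
    (hH₂ : ∀ η > c, ∀ᶠ y in 𝓝 x, ∀ p, -η ≤ H₂ y p) (hs : 0 ≤ s) (hst : s ≤ t) :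
    max (u₁ (x, t)) (u₂ (x, t)) ≤ max (u₁ (x, s)) (u₂ (x, s)) + c * (t - s) := by
  have hbound : ∀ η > c,
      max (u₁ (x, t)) (u₂ (x, t)) ≤ max (u₁ (x, s)) (u₂ (x, s)) + η * (t - s) := by
    intro η hη
    have hderiv := hsub.viscTimeDerivLE_max (fun _ hy => hy.1) (fun _ hy => hy.2)
      (U := {y | (∀ p, -η ≤ H₁ y p) ∧ ∀ p, -η ≤ H₂ y p})
    have hpos : Ioo s (t + 1) ⊆ Ioi 0 := fun _ hτ => hs.trans_lt hτ.1
    exact (hderiv.mono (prod_mono_right hpos)).le_add_mul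
      ((hu₁.sup hu₂).mono fun _ hq => hs.trans hq.2.1) ((hH₁ η hη).and (hH₂ η hη)) hst
      (lt_add_one t)
  have hlim : Tendsto (fun η => max (u₁ (x, s)) (u₂ (x, s)) + η * (t - s)) (𝓝[>] c)
      (𝓝 (max (u₁ (x, s)) (u₂ (x, s)) + c * (t - s))) :=
    (Continuous.tendsto (by fun_prop) c).mono_left nhdsWithin_le_nhds
  exact ge_of_tendsto hlim (eventually_mem_nhdsWithin.mono hbound)

theorem eventually_forall_neg_le_sub_of_upperSemicontinuousAt {X P : Type*} [TopologicalSpace X]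
    {F : X → P → ℝ} {f : X → ℝ} {x : X} {η : ℝ} (hF : ∀ y p, 0 ≤ F y p)
    (hf : UpperSemicontinuousAt f x) (hη : f x < η) :
    ∀ᶠ y in 𝓝 x, ∀ p, -η ≤ F y p - f y := by
  filter_upwards [hf η hη] with y hy p
  linarith [hF y p]

theorem stmt8_general {F₁ F₂ : En n → En n → ℝ} {f₁ f₂ : En n → ℝ} {x : En n}
    (hF₁ : ∀ y p, 0 ≤ F₁ y p) (hF₂ : ∀ y p, 0 ≤ F₂ y p)
    (hf₁ : UpperSemicontinuousAt f₁ x) (hf₂ : UpperSemicontinuousAt f₂ x)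
    (hu₁ : UpperSemicontinuousOn u₁ {q | 0 ≤ q.2}) (hu₂ : UpperSemicontinuousOn u₂ {q | 0 ≤ q.2})
    (hsub : SysSub (fun y p => F₁ y p - f₁ y) (fun y p => F₂ y p - f₂ y) u₁ u₂)
    (hx₁ : f₁ x ≤ 0) (hx₂ : f₂ x ≤ 0) :
    AntitoneOn (fun t => max (u₁ (x, t)) (u₂ (x, t))) (Ici 0) := by
  intro s hs t _ hst
  have h := hsub.max_le_add_mul hu₁ hu₂ (c := 0)
    (fun _ hη => eventually_forall_neg_le_sub_of_upperSemicontinuousAt hF₁ hf₁ (hx₁.trans_lt hη))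
    (fun _ hη => eventually_forall_neg_le_sub_of_upperSemicontinuousAt hF₂ hf₂ (hx₂.trans_lt hη))
    hs hst
  simpa only [zero_mul, add_zero] using h

end CoupledSystem

/-- Monotonicity Property 2 (Proposition 3.4): on A, t ↦ max(u1, u2)(x,t) is nonincreasing. -/
theorem stmt8 (n : ℕ) (hn : 1 ≤ n)
(F₁ F₂ : En n → En n → ℝ) (f₁ f₂ : En n → ℝ)
    (hF₁cont : Continuous fun q : En n × En n => F₁ q.1 q.2)
    (hF₂cont : Continuous fun q : En n × En n => F₂ q.1 q.2)
    (hF₁per : ZPeriodicH F₁) (hF₂per : ZPeriodicH F₂)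
    (hF₁coer : Coercive F₁) (hF₂coer : Coercive F₂)
    (hf₁cont : Continuous f₁) (hf₂cont : Continuous f₂)
    (hf₁per : ZPeriodic f₁) (hf₂per : ZPeriodic f₂)
    -- (A2)
    (hA2 : ∀ x : En n, 0 ≤ f₁ x ∧ 0 ≤ f₂ x)
    -- (A3)
    (hA3 : ∃ x : En n, f₁ x = 0 ∧ f₂ x = 0)
    -- (A4)
    (hA4 : ∃ lam₀ : ℝ, 0 < lam₀ ∧ lam₀ < 1 ∧
      ∀ lam : ℝ, lam₀ ≤ lam → lam ≤ 1 → ∀ x : En n, ¬(f₁ x = 0 ∧ f₂ x = 0) →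
        ∀ p : En n, F₁ x (lam • p) ≤ lam * F₁ x p ∧ F₂ x (lam • p) ≤ lam * F₂ x p)
    -- (A5)
    (hA5 : (∀ (x p : En n), 0 ≤ F₁ x p ∧ 0 ≤ F₂ x p) ∧ ∀ x : En n, F₁ x 0 = 0 ∧ F₂ x 0 = 0)
    (u₀₁ u₀₂ : En n → ℝ) (hu₀₁ : IsLip u₀₁) (hu₀₂ : IsLip u₀₂)
    (hu₀₁per : ZPeriodic u₀₁) (hu₀₂per : ZPeriodic u₀₂)
    (u₁ u₂ : En n × ℝ → ℝ) (hu₁per : ZPeriodicST u₁) (hu₂per : ZPeriodicST u₂)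
    (hsol : SysSolution (fun x p => F₁ x p - f₁ x) (fun x p => F₂ x p - f₂ x) u₀₁ u₀₂ u₁ u₂) :
    ∀ x : En n, f₁ x = 0 → f₂ x = 0 → ∀ s t : ℝ, 0 ≤ s → s ≤ t →
      max (u₁ (x, t)) (u₂ (x, t)) ≤ max (u₁ (x, s)) (u₂ (x, s)) := by
  intro x hx₁ hx₂ s t hs hst
  obtain ⟨hu₁, hu₂, hsub, -⟩ := hsol
  exact stmt8_general (fun y p => (hA5.1 y p).1) (fun y p => (hA5.1 y p).2)
    hf₁cont.continuousAt.upperSemicontinuousAt hf₂cont.continuousAt.upperSemicontinuousAt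
    hu₁.upperSemicontinuousOn hu₂.upperSemicontinuousOn hsub hx₁.le hx₂.le
    hs (hs.trans hst) hst
end
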